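/- Let n ≤ 3, let f ∈ ℂ[x_0,…,x_n]_d be a reduced homogeneous polynomial such that V(f) ⊂ ℙ^n is not a cone, and let 1 < k < d−1. Then there exist n+1 algebraically independent elements over ℂ among the k-th order partial derivatives {∂^α f : |α| = k}; equivalently, the k-th polar map of V(f) is not degenerate. -/

import Mathlib

/-!
If no `n + 1` of the `k`-th derivatives of `f` are algebraically independent, the Jacobian
criterion gives a nonzero polynomial vector field `v`, encoded as the derivation `D = ∑ᵢ vᵢ ∂ᵢ`,
that kills all of them. By Euler's identity `D` then kills every `∂^α f` with `|α| ≤ k`; for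
`|α| = 1` this says that `v` is in the kernel of the Hessian matrix `H` of `f`.

Since `D` also kills the second derivatives, differentiating `H v = 0` shows that every `∂ₖ v` is
again in `ker H`. If `ker H` has rank one, then `∂ₖ v` is proportional to `v`, so `v` is a multiple
of a constant vector and `V(f)` is a cone.

The rank of `ker H` cannot be larger in at most four variables. The gradient `∇f` is constant along
the lines `a + s v(a)` for every `v ∈ ker H`. Let `W a` be the space of values at `a` of `ker H`,
of dimension at least two at a general point, and `T a = W a + K a`. On `T a` the gradient is
`t ^ (d - 1) ∇f(a)`, with `t` the coordinate along `a`. If `∇f(a)` and `∇f(b)` are independent,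
then `∇f` vanishes on `T a ⊓ T b`, which is therefore contained in `W a ⊓ W b`; counting dimensions
gives `W a = W b`. Thus `W` is generically constant, and `V(f)` is a cone.
-/

open MvPolynomial Module

/-- The differential operator `∂^α` on `ℂ[x_0,…,x_{N-1}]` given by a multi-index
`α : Fin N → ℕ`. -/
noncomputable def pd {N : ℕ} (α : Fin N → ℕ) :
    Module.End ℂ (MvPolynomial (Fin N) ℂ) :=
  (List.ofFn fun i =>
    ((MvPolynomial.pderiv (R := ℂ) i).toLinearMap :
      Module.End ℂ (MvPolynomial (Fin N) ℂ)) ^ (α i)).prod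

/-! ### Partial derivatives and derivations -/

section PartialDerivatives

variable {σ R : Type*} [CommRing R]

theorem pderiv_pderiv_comm (i j : σ) (p : MvPolynomial σ R) :
    pderiv i (pderiv j p) = pderiv j (pderiv i p) := by
  classical
  have hbracket : ⁅pderiv (R := R) i, pderiv j⁆ = 0 :=
    derivation_ext fun l => by
      rw [Derivation.commutator_apply]
      simp [pderiv_X, Pi.single_apply, apply_ite]
  have hp := DFunLike.congr_fun hbracket p
  rw [Derivation.commutator_apply] at hp
  exact sub_eq_zero.1 hp

theorem derivation_aeval {ι A M : Type*} [Fintype ι] [CommRing A] [Algebra R A] [AddCommGroup M]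
    [Module A M] [Module R M] [IsScalarTower R A M] (D : Derivation R A M) (g : ι → A)
    (p : MvPolynomial ι R) :
    D (aeval g p) = ∑ i, aeval g (pderiv i p) • D (g i) := by
  classical
  induction p using MvPolynomial.induction_on with
  | C c => simp
  | add p q hp hq => simp only [map_add, hp, hq, add_smul, Finset.sum_add_distrib]
  | mul_X p j hp =>
    simp only [map_mul, aeval_X, Derivation.leibniz, hp, smul_eq_mul, map_add, add_smul,
      Finset.sum_add_distrib, pderiv_X, Pi.single_apply, mul_ite, mul_one, mul_zero,
      apply_ite (aeval g), map_zero, ite_smul, zero_smul, Finset.sum_ite_eq, Finset.mem_univ,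
      if_true, mul_smul, Finset.smul_sum]

theorem derivation_eq_sum_pderiv [Fintype σ]
    (D : Derivation R (MvPolynomial σ R) (MvPolynomial σ R)) (p : MvPolynomial σ R) :
    D p = ∑ i, D (X i) * pderiv i p := by
  simpa [mul_comm] using derivation_aeval D X p

theorem totalDegree_pderiv_lt {i : σ} {p : MvPolynomial σ R} (h : pderiv i p ≠ 0) :
    (pderiv i p).totalDegree < p.totalDegree := by
  obtain ⟨m, hm, hdeg⟩ := Finset.exists_mem_eq_sup (pderiv i p).support
    (support_nonempty.2 h) (fun m => m.sum fun _ e => e)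
  have hmem : m + Finsupp.single i 1 ∈ p.support := by
    rw [MvPolynomial.mem_support_iff, coeff_pderiv] at hm
    exact MvPolynomial.mem_support_iff.2 (left_ne_zero_of_mul hm)
  calc (pderiv i p).totalDegree = m.sum fun _ e => e := hdeg
    _ < (m + Finsupp.single i 1).sum fun _ e => e := by
      classical
      rw [Finsupp.sum_add_index' (fun _ => rfl) (fun _ _ _ => rfl),
        Finsupp.sum_single_index rfl]
      exact Nat.lt_succ_self _
    _ ≤ p.totalDegree := le_totalDegree hmem

theorem eq_C_of_pderiv_eq_zero [NoZeroDivisors R] [CharZero R] {p : MvPolynomial σ R}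
    (h : ∀ i, pderiv i p = 0) : p = C (coeff 0 p) := by
  classical
  ext m
  rw [coeff_C]
  split_ifs with hm
  · rw [hm]
  · obtain ⟨i, hi⟩ := Finsupp.ne_iff.1 (Ne.symm hm)
    have hle : Finsupp.single i 1 ≤ m :=
      Finsupp.single_le_iff.2 (Nat.one_le_iff_ne_zero.2 hi)
    have hcoeff := coeff_pderiv (i := i) p (m - Finsupp.single i 1)
    rw [h i, tsub_add_cancel_of_le hle, coeff_zero] at hcoeff
    exact (mul_eq_zero.1 hcoeff.symm).resolve_right (Nat.cast_add_one_ne_zero _)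

theorem pderiv_eq_zero_of_dvd [NoZeroDivisors R] {i : σ} {p : MvPolynomial σ R}
    (h : p ∣ pderiv i p) : pderiv i p = 0 := by
  by_contra hne
  obtain ⟨c, hc⟩ := h
  have hlt := totalDegree_pderiv_lt hne
  rw [hc] at hne hlt
  rw [totalDegree_mul_of_isDomain (left_ne_zero_of_mul hne) (right_ne_zero_of_mul hne)] at hlt
  omega

theorem pderiv_eq_zero_of_isRelPrime [IsDomain R] [UniqueFactorizationMonoid R] {i : σ}
    {p q : MvPolynomial σ R}
    (hpq : IsRelPrime p q) (h : q * pderiv i p = p * pderiv i q) : pderiv i p = 0 :=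
  pderiv_eq_zero_of_dvd (hpq.dvd_of_dvd_mul_left ⟨_, h⟩)

theorem exists_eq_C_mul_of_wronskian_eq_zero {K : Type*} [Field K] [CharZero K]
    {p q : MvPolynomial σ K} (hq : q ≠ 0) (h : ∀ i, q * pderiv i p = p * pderiv i q) :
    ∃ c : K, p = C c * q := by
  obtain ⟨p', q', g, hrel, rfl, rfl⟩ :=
    UniqueFactorizationMonoid.exists_reduced_factors' p q hq
  have hg : g ≠ 0 := left_ne_zero_of_mul hq
  have hreduced : ∀ i, q' * pderiv i p' = p' * pderiv i q' := by
    intro i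
    have hi := h i
    rw [pderiv_mul, pderiv_mul] at hi
    refine mul_left_cancel₀ (mul_ne_zero hg hg) ?_
    linear_combination hi
  have hp' := eq_C_of_pderiv_eq_zero fun i => pderiv_eq_zero_of_isRelPrime hrel (hreduced i)
  have hq' := eq_C_of_pderiv_eq_zero fun i =>
    pderiv_eq_zero_of_isRelPrime hrel.symm (hreduced i).symm
  have hc : coeff 0 q' ≠ 0 := fun h0 => right_ne_zero_of_mul hq (by rw [hq', h0, C_0])
  refine ⟨coeff 0 p' / coeff 0 q', ?_⟩
  rw [hp', hq', coeff_zero_C, coeff_zero_C, mul_left_comm, ← C_mul, div_mul_cancel₀ _ hc]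

end PartialDerivatives

/-! ### The Jacobian criterion -/

section Jacobian

theorem algebraicIndependent_of_linearIndependent_derivation {ι K A M : Type*} [Finite ι] [Field K]
    [CharZero K] [CommRing A] [Nontrivial A] [Algebra K A] [AddCommGroup M] [Module A M]
    [Module K M] [IsScalarTower K A M] (D : Derivation K A M) (g : ι → A)
    (h : LinearIndependent A fun i => D (g i)) : AlgebraicIndependent K g := by
  have := Fintype.ofFinite ι
  rw [algebraicIndependent_iff]
  intro p
  induction hn : p.totalDegree using Nat.strong_induction_on generalizing p with
  | _ n ih =>
    intro hp
    have hrel : ∑ i, aeval g (pderiv i p) • D (g i) = 0 := by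
      rw [← derivation_aeval, hp, map_zero]
    have hpderiv : ∀ i, pderiv i p = 0 := by
      intro i
      by_contra hne
      exact hne (ih _ (hn ▸ totalDegree_pderiv_lt hne) _ rfl
        (Fintype.linearIndependent_iff.1 h _ hrel i))
    rw [eq_C_of_pderiv_eq_zero hpderiv, aeval_C, FaithfulSMul.algebraMap_eq_zero_iff] at hp
    rw [eq_C_of_pderiv_eq_zero hpderiv, hp, C_0]

variable {ι R : Type*} [Fintype ι] [CommRing R] [IsDomain R]

theorem exists_dotProduct_eq_zero_of_span_ne_top {K : Type*} [Field K] [Algebra R K]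
    [IsFractionRing R K] {s : Set (ι → R)}
    (h : Submodule.span K ((fun r i => algebraMap R K (r i)) '' s) ≠ ⊤) :
    ∃ v : ι → R, v ≠ 0 ∧ ∀ r ∈ s, ∑ i, v i * r i = 0 := by
  classical
  obtain ⟨φ, hφ, hle⟩ := Submodule.exists_le_ker_of_lt_top _ (lt_top_iff_ne_top.2 h)
  have hφ_apply : ∀ x : ι → K, φ x = ∑ i, φ (Pi.single i 1) * x i := by
    intro x
    conv_lhs => rw [pi_eq_sum_univ' x]
    simp only [map_sum, map_smul, smul_eq_mul, mul_comm]
  obtain ⟨b, hb⟩ := IsLocalization.exist_integer_multiples_of_finite (nonZeroDivisors R)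
    fun i => φ (Pi.single i 1)
  choose v hv using hb
  have hb0 : algebraMap R K b ≠ 0 := IsFractionRing.to_map_ne_zero_of_mem_nonZeroDivisors b.2
  refine ⟨v, fun hv0 => hφ (LinearMap.ext fun x => ?_), fun r hr => ?_⟩
  · have hbasis : ∀ i, φ (Pi.single i 1) = 0 := by
      intro i
      have hi := hv i
      rw [hv0, Pi.zero_apply, map_zero, Algebra.smul_def] at hi
      exact (mul_eq_zero.1 hi.symm).resolve_left hb0
    rw [hφ_apply]
    simp only [hbasis, zero_mul, Finset.sum_const_zero, LinearMap.zero_apply]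
  · refine IsFractionRing.injective R K ?_
    calc algebraMap R K (∑ i, v i * r i)
        = algebraMap R K b * ∑ i, φ (Pi.single i 1) * algebraMap R K (r i) := by
          rw [map_sum, Finset.mul_sum]
          exact Finset.sum_congr rfl fun i _ => by
            rw [map_mul, hv i, Algebra.smul_def, mul_assoc]
      _ = algebraMap R K 0 := by
          rw [← hφ_apply, LinearMap.mem_ker.1 (hle (Submodule.subset_span ⟨r, hr, rfl⟩)), mul_zero,
            map_zero]

theorem exists_linearIndependent_or_dotProduct_eq_zero (s : Set (ι → R)) :
    (∃ r : ι → ι → R, (∀ i, r i ∈ s) ∧ LinearIndependent R r) ∨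
      ∃ v : ι → R, v ≠ 0 ∧ ∀ r ∈ s, ∑ i, v i * r i = 0 := by
  classical
  let K := FractionRing R
  let toFrac : (ι → R) →ₗ[R] ι → K := (Algebra.linearMap R K).compLeft ι
  by_cases htop : Submodule.span K (toFrac '' s) = ⊤
  · left
    obtain ⟨b, hb, -, hli⟩ := Submodule.exists_fun_fin_finrank_span_eq K (toFrac '' s)
    have hcard : Fintype.card ι = finrank K (Submodule.span K (toFrac '' s)) := by
      rw [htop, finrank_top, finrank_fintype_fun_eq_card]
    choose r hr hrb using hb
    let e := Fintype.equivFinOfCardEq hcard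
    have hrows : LinearIndependent K (toFrac ∘ r ∘ e) := by
      rw [← Function.comp_assoc, show toFrac ∘ r = b from funext hrb]
      exact hli.comp e e.injective
    exact ⟨r ∘ e, fun i => hr (e i),
      ((LinearIndependent.iff_fractionRing R K).2 hrows).of_comp toFrac⟩
  · exact Or.inr (exists_dotProduct_eq_zero_of_span_ne_top htop)

/-- The gradient `p ↦ (∂ᵢp)ᵢ`, bundled as a derivation so that the Jacobian criterion applies. -/
noncomputable def grad (σ R : Type*) [CommRing R] :
    Derivation R (MvPolynomial σ R) (σ → MvPolynomial σ R) :=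
  Derivation.mk' (LinearMap.pi fun i => (pderiv i).toLinearMap) fun p q => by
    ext1 i; exact (pderiv i).leibniz p q

theorem exists_algebraicIndependent_or_derivation_eq_zero {σ K : Type*} [Finite σ] [Field K]
    [CharZero K] (S : Set (MvPolynomial σ K)) :
    (∃ g : σ → MvPolynomial σ K, (∀ i, g i ∈ S) ∧ AlgebraicIndependent K g) ∨
      ∃ D : Derivation K (MvPolynomial σ K) (MvPolynomial σ K), D ≠ 0 ∧ ∀ p ∈ S, D p = 0 := by
  have := Fintype.ofFinite σ
  rcases exists_linearIndependent_or_dotProduct_eq_zero (grad σ K '' S) with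
    ⟨r, hr, hli⟩ | ⟨v, hv0, hv⟩
  · choose g hgS hg using hr
    refine Or.inl ⟨g, hgS, algebraicIndependent_of_linearIndependent_derivation (grad σ K) g ?_⟩
    rwa [show (fun i => grad σ K (g i)) = r from funext hg]
  · refine Or.inr ⟨mkDerivation K v, fun h0 => hv0 (funext fun i => ?_), fun p hp => ?_⟩
    · rw [← mkDerivation_X K v i, h0, Derivation.zero_apply, Pi.zero_apply]
    · rw [derivation_eq_sum_pderiv]
      simp only [mkDerivation_X]
      exact hv _ ⟨p, hp, rfl⟩

end Jacobian

/-! ### Higher derivatives and Euler's identity -/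

section IteratedPDeriv

theorem prod_ofFn_pow_add_single {M : Type*} [Monoid M] {N : ℕ} (x : Fin N → M)
    (hx : ∀ i j, Commute (x i) (x j)) (α : Fin N → ℕ) (j : Fin N) :
    (List.ofFn fun i => x i ^ (α + Pi.single j 1 : Fin N → ℕ) i).prod =
      (List.ofFn fun i => x i ^ α i).prod * x j := by
  induction N with
  | zero => exact j.elim0
  | succ N ih =>
    rw [List.ofFn_succ, List.ofFn_succ, List.prod_cons, List.prod_cons]
    cases j using Fin.cases with
    | zero =>
      have hcomm : Commute (x 0) (List.ofFn fun i : Fin N => x i.succ ^ α i.succ).prod :=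
        Commute.list_prod_right _ _ fun y hy => by
          obtain ⟨i, rfl⟩ := (List.mem_ofFn' _ _).1 hy
          exact (hx 0 i.succ).pow_right _
      simp only [Pi.add_apply, Pi.single_eq_same, pow_succ, mul_assoc, hcomm.eq,
        Pi.single_eq_of_ne (Fin.succ_ne_zero _), add_zero]
    | succ j =>
      have htail := ih (fun i => x i.succ) (fun i j => hx i.succ j.succ) (fun i => α i.succ) j
      have hzero : (α + Pi.single j.succ 1 : Fin (N + 1) → ℕ) 0 = α 0 := by
        simp [(Fin.succ_ne_zero j).symm]
      have hsucc : ∀ i : Fin N, (α + Pi.single j.succ 1 : Fin (N + 1) → ℕ) i.succ =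
          ((fun i => α i.succ) + Pi.single j 1 : Fin N → ℕ) i := by
        intro i
        simp [Pi.single_apply]
      simp only [hzero, hsucc, htail, mul_assoc]

variable {R : Type*} [CommRing R]

/-- The differential operator `∂^α` given by a multi-index `α`, as `pd` but over an arbitrary ring
of coefficients. -/
noncomputable def iteratedPDeriv (R : Type*) [CommRing R] {N : ℕ} (α : Fin N → ℕ) :
    Module.End R (MvPolynomial (Fin N) R) :=
  (List.ofFn fun i =>
    ((pderiv i).toLinearMap : Module.End R (MvPolynomial (Fin N) R)) ^ α i).prod

theorem iteratedPDeriv_zero {N : ℕ} : iteratedPDeriv R (0 : Fin N → ℕ) = 1 := by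
  simp [iteratedPDeriv]

theorem iteratedPDeriv_add_single {N : ℕ} (α : Fin N → ℕ) (j : Fin N)
    (f : MvPolynomial (Fin N) R) :
    iteratedPDeriv R (α + Pi.single j 1) f = iteratedPDeriv R α (pderiv j f) :=
  LinearMap.congr_fun
    (prod_ofFn_pow_add_single (fun i => (pderiv i).toLinearMap)
      (fun i j => LinearMap.ext (pderiv_pderiv_comm i j)) α j) f

end IteratedPDeriv

section Euler

variable {σ R : Type*} [CommRing R] {p : MvPolynomial σ R} {e : ℕ}
  {D : Derivation R (MvPolynomial σ R) (MvPolynomial σ R)}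

theorem sum_X_mul_derivation_pderiv [Fintype σ] (hp : p.IsHomogeneous e)
    (D : Derivation R (MvPolynomial σ R) (MvPolynomial σ R)) :
    ∑ i, X i * D (pderiv i p) + D p = e • D p := by
  have hEuler := congrArg D hp.sum_X_mul_pderiv
  rw [map_nsmul] at hEuler
  rw [← hEuler, map_sum]
  simp only [Derivation.leibniz, smul_eq_mul, Finset.sum_add_distrib]
  rw [derivation_eq_sum_pderiv D p]
  simp only [mul_comm]

theorem derivation_eq_zero_of_pderiv [Finite σ] [NoZeroDivisors R] [CharZero R]
    (hp : p.IsHomogeneous e) (he : 1 < e) (h : ∀ i, D (pderiv i p) = 0) : D p = 0 := by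
  have := Fintype.ofFinite σ
  have hEuler := sum_X_mul_derivation_pderiv hp D
  simp only [h, mul_zero, Finset.sum_const_zero, zero_add] at hEuler
  have hscaled : (e - 1) • D p = 0 := by
    refine add_right_cancel (b := D p) ?_
    rw [← succ_nsmul, Nat.sub_add_cancel he.le, zero_add, ← hEuler]
  exact (smul_eq_zero.1 hscaled).resolve_left (by omega)

theorem derivation_eq_zero_of_iteratedPDeriv [NoZeroDivisors R] [CharZero R] {N d k : ℕ}
    {D : Derivation R (MvPolynomial (Fin N) R) (MvPolynomial (Fin N) R)}
    {f : MvPolynomial (Fin N) R} (hf : f.IsHomogeneous d) (hk : k < d)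
    (h : ∀ α : Fin N → ℕ, ∑ i, α i = k → D (iteratedPDeriv R α f) = 0) : D f = 0 := by
  induction k generalizing f d with
  | zero => simpa [iteratedPDeriv_zero] using h 0 (by simp)
  | succ k ih =>
    refine derivation_eq_zero_of_pderiv hf (by omega) fun j =>
      ih hf.pderiv (by omega) fun α hα => ?_
    rw [← iteratedPDeriv_add_single]
    exact h _ (by simp [Finset.sum_add_distrib, hα])

end Euler

/-! ### The kernel of the Hessian matrix -/

section HessianKernel

variable {σ R : Type*} [CommRing R]

/-- The kernel of the Hessian matrix of `f`. A vector `v` of polynomials is encoded as the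
derivation `∑ᵢ vᵢ ∂ᵢ`, so that `v` is in the kernel iff this derivation kills each `∂ⱼ f`. -/
def hessianKer (f : MvPolynomial σ R) :
    Submodule (MvPolynomial σ R) (Derivation R (MvPolynomial σ R) (MvPolynomial σ R)) where
  carrier := {D | ∀ j, D (pderiv j f) = 0}
  zero_mem' _ := rfl
  add_mem' hD hE j := by rw [Derivation.add_apply, hD j, hE j, add_zero]
  smul_mem' c D hD j := by rw [Derivation.smul_apply, hD j, smul_zero]

variable {f : MvPolynomial σ R} {D : Derivation R (MvPolynomial σ R) (MvPolynomial σ R)}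

theorem mem_hessianKer : D ∈ hessianKer f ↔ ∀ j, D (pderiv j f) = 0 :=
  Iff.rfl

theorem commutator_pderiv_mem_hessianKer (hD : D ∈ hessianKer f)
    (hD₂ : ∀ i j, D (pderiv i (pderiv j f)) = 0) (i : σ) :
    ⁅pderiv (R := R) i, D⁆ ∈ hessianKer f := by
  intro j
  rw [Derivation.commutator_apply, mem_hessianKer.1 hD j, hD₂, map_zero, sub_zero]

theorem commutator_pderiv_X (i j : σ) : ⁅pderiv (R := R) i, D⁆ (X j) = pderiv i (D (X j)) := by
  classical
  rw [Derivation.commutator_apply, pderiv_X]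
  by_cases hij : i = j <;> simp [hij]

end HessianKernel

section HessianKernelField

variable {σ K : Type*} [Finite σ] [Field K] [CharZero K] {f : MvPolynomial σ K} {d : ℕ}

theorem eq_zero_of_mkDerivation_C_mem_hessianKer (hd : 1 < d) (hf : f.IsHomogeneous d)
    (hcone : LinearIndependent K fun i => pderiv i f) {c : σ → K}
    (hc : mkDerivation K (fun i => C (c i)) ∈ hessianKer f) : c = 0 := by
  have := Fintype.ofFinite σ
  have hcf := derivation_eq_zero_of_pderiv hf hd hc
  rw [derivation_eq_sum_pderiv] at hcf
  simp only [mkDerivation_X, C_mul'] at hcf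
  exact funext (Fintype.linearIndependent_iff.1 hcone c hcf)

theorem eq_zero_of_hessianKer_rank_le_one (hd : 1 < d) (hf : f.IsHomogeneous d)
    (hcone : LinearIndependent K fun i => pderiv i f)
    (hrank : ∀ D ∈ hessianKer f, ∀ E ∈ hessianKer f, ∀ i j,
      D (X i) * E (X j) = D (X j) * E (X i))
    {D : Derivation K (MvPolynomial σ K) (MvPolynomial σ K)} (hD : D ∈ hessianKer f)
    (hD₂ : ∀ i j, D (pderiv i (pderiv j f)) = 0) : D = 0 := by
  by_contra hne
  obtain ⟨i₀, hi₀⟩ : ∃ i, D (X i) ≠ 0 := by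
    by_contra! hX
    exact hne (derivation_ext hX)
  have hwronskian : ∀ j i, D (X i₀) * pderiv i (D (X j)) = D (X j) * pderiv i (D (X i₀)) := by
    intro j i
    simpa only [commutator_pderiv_X] using
      hrank D hD _ (commutator_pderiv_mem_hessianKer hD hD₂ i) i₀ j
  choose c hc using fun j => exists_eq_C_mul_of_wronskian_eq_zero hi₀ (hwronskian j)
  have hDc : D = D (X i₀) • mkDerivation K fun i => C (c i) :=
    derivation_ext fun i => by
      rw [Derivation.smul_apply, mkDerivation_X, smul_eq_mul, mul_comm, ← hc]
  have hc0 : c = 0 := eq_zero_of_mkDerivation_C_mem_hessianKer hd hf hcone fun j => by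
    have hj := mem_hessianKer.1 hD j
    rw [hDc, Derivation.smul_apply, smul_eq_mul] at hj
    exact (mul_eq_zero.1 hj).resolve_left hi₀
  exact hi₀ (by rw [hc i₀, hc0, Pi.zero_apply, C_0, zero_mul])

end HessianKernelField

/-! ### The gradient along kernel directions -/

section FrozenIterate

variable {σ R : Type*} [Fintype σ] [CommRing R]
  {D : Derivation R (MvPolynomial σ R) (MvPolynomial σ R)}

/-- The `m`-th iterate of the derivation `D` with its coefficients `vᵢ = D (X i)` treated as
constants: `∑ v_{i₁} ⋯ v_{iₘ} ∂_{i₁} ⋯ ∂_{iₘ} p`. Its value at `a` is the `m`-th derivative of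
`s ↦ p (a + s v(a))` at `0`. -/
noncomputable def frozenIterate (D : Derivation R (MvPolynomial σ R) (MvPolynomial σ R)) :
    ℕ → MvPolynomial σ R → MvPolynomial σ R
  | 0, p => p
  | m + 1, p => ∑ i, D (X i) * frozenIterate D m (pderiv i p)

theorem pderiv_frozenIterate_succ (m : ℕ) (k : σ) (p : MvPolynomial σ R) :
    pderiv k (frozenIterate D (m + 1) p) = frozenIterate D (m + 1) (pderiv k p) +
      (m + 1) * ∑ i, pderiv k (D (X i)) * frozenIterate D m (pderiv i p) := by
  induction m generalizing p with
  | zero =>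
    simp only [frozenIterate, map_sum, pderiv_mul, Finset.sum_add_distrib,
      pderiv_pderiv_comm k, Nat.cast_zero, zero_add, one_mul]
    exact add_comm _ _
  | succ m ih =>
    let S := ∑ j, pderiv k (D (X j)) * frozenIterate D (m + 1) (pderiv j p)
    have hswap :
        ∑ i, D (X i) * ∑ j, pderiv k (D (X j)) * frozenIterate D m (pderiv j (pderiv i p)) = S := by
      simp only [S, frozenIterate, Finset.mul_sum]
      rw [Finset.sum_comm]
      refine Finset.sum_congr rfl fun j _ => Finset.sum_congr rfl fun i _ => ?_
      rw [pderiv_pderiv_comm j i, mul_left_comm]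
    have hstep : ∑ i, D (X i) * pderiv k (frozenIterate D (m + 1) (pderiv i p)) =
        frozenIterate D (m + 2) (pderiv k p) + (m + 1) * S := by
      simp only [ih, mul_add, mul_left_comm (D _) (m + 1 : MvPolynomial σ R),
        Finset.sum_add_distrib, ← Finset.mul_sum, hswap, pderiv_pderiv_comm k]
      rfl
    calc pderiv k (frozenIterate D (m + 2) p)
        = ∑ i, D (X i) * pderiv k (frozenIterate D (m + 1) (pderiv i p)) + S := by
          rw [frozenIterate, map_sum]
          simp only [S, pderiv_mul, Finset.sum_add_distrib]
          exact add_comm _ _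
      _ = frozenIterate D (m + 2) (pderiv k p) + ((m + 1 : ℕ) + 1) * S := by
          rw [hstep]
          push_cast
          ring

theorem frozenIterate_pderiv_eq_zero {f : MvPolynomial σ R} (hD : D ∈ hessianKer f) (m : ℕ)
    (k : σ) : frozenIterate D (m + 1) (pderiv k f) = 0 := by
  induction m generalizing k with
  | zero =>
    simp only [frozenIterate]
    rw [← derivation_eq_sum_pderiv, mem_hessianKer.1 hD k]
  | succ m ih =>
    have hdiff : ∀ j, frozenIterate D (m + 1) (pderiv j (pderiv k f)) =
        -((m + 1) * ∑ i, pderiv k (D (X i)) * frozenIterate D m (pderiv i (pderiv j f))) := by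
      intro j
      have hj := pderiv_frozenIterate_succ (D := D) m k (pderiv j f)
      rw [ih j, map_zero] at hj
      rw [pderiv_pderiv_comm j k]
      exact eq_neg_of_add_eq_zero_left hj.symm
    calc frozenIterate D (m + 2) (pderiv k f)
        = ∑ j, D (X j) * frozenIterate D (m + 1) (pderiv j (pderiv k f)) := rfl
      _ = -((m + 1) * ∑ i, pderiv k (D (X i)) *
            ∑ j, D (X j) * frozenIterate D m (pderiv j (pderiv i f))) := by
          simp only [hdiff, Finset.mul_sum, mul_neg, Finset.sum_neg_distrib]
          rw [Finset.sum_comm]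
          simp only [pderiv_pderiv_comm, mul_left_comm]
      _ = 0 := by
          have hi : ∀ i, ∑ j, D (X j) * frozenIterate D m (pderiv j (pderiv i f)) = 0 := ih
          simp only [hi, mul_zero, Finset.sum_const_zero, neg_zero]

end FrozenIterate

section LineRestrict

variable {σ R : Type*} [CommRing R] (a w : σ → R)

/-- Restriction of a polynomial to the line `s ↦ a + s w`, as a univariate polynomial in `s`, so
that constancy along the line can be read off its derivatives at `s = 0`. -/
noncomputable def lineRestrict : MvPolynomial σ R →ₐ[R] Polynomial R :=
  aeval fun i => Polynomial.C (a i) + Polynomial.C (w i) * Polynomial.X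

theorem eval_lineRestrict (s : R) (p : MvPolynomial σ R) :
    (lineRestrict a w p).eval s = eval (a + s • w) p := by
  have hcomp : (Polynomial.aeval s).comp (lineRestrict a w) = aeval (a + s • w) :=
    algHom_ext fun i => by
      simp only [lineRestrict, AlgHom.comp_apply, aeval_X, map_add, map_mul, Polynomial.aeval_C,
        Polynomial.aeval_X, Algebra.algebraMap_self_apply, Pi.add_apply, Pi.smul_apply,
        smul_eq_mul, mul_comm]
  exact DFunLike.congr_fun hcomp p

variable [Fintype σ]

theorem derivative_lineRestrict (p : MvPolynomial σ R) :
    Polynomial.derivative (lineRestrict a w p) =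
      ∑ i, Polynomial.C (w i) * lineRestrict a w (pderiv i p) := by
  refine (derivation_aeval Polynomial.derivative' _ p).trans
    (Finset.sum_congr rfl fun i _ => ?_)
  rw [smul_eq_mul, mul_comm]
  congr 1
  simp

theorem eval_zero_iterate_derivative_lineRestrict
    (D : Derivation R (MvPolynomial σ R) (MvPolynomial σ R)) (m : ℕ) (p : MvPolynomial σ R) :
    (Polynomial.derivative^[m] (lineRestrict a (fun i => eval a (D (X i))) p)).eval 0 =
      eval a (frozenIterate D m p) := by
  induction m generalizing p with
  | zero => simp [eval_lineRestrict, frozenIterate]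
  | succ m ih =>
    simp only [Function.iterate_succ_apply, derivative_lineRestrict,
      Polynomial.iterate_derivative_sum, Polynomial.iterate_derivative_C_mul,
      Polynomial.eval_finsetSum, Polynomial.eval_mul, Polynomial.eval_C, ih, frozenIterate,
      map_sum, map_mul]

end LineRestrict

section KernelDirections

variable {σ R : Type*} [CommRing R]

/-- The gradient of `f` at the point `a`; it is compared at points that differ by a vector in the
kernel of the Hessian matrix. -/
noncomputable def gradAt (f : MvPolynomial σ R) (a : σ → R) : σ → R :=
  fun j => eval a (pderiv j f)

/-- The values at the point `a` of the polynomial vector fields in the kernel of the Hessian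
matrix of `f`. It may be smaller than the kernel of the Hessian matrix evaluated at `a`. -/
def hessianKerAt (f : MvPolynomial σ R) (a : σ → R) : Submodule R (σ → R) where
  carrier := {w | ∃ D ∈ hessianKer f, (fun i => eval a (D (X i))) = w}
  zero_mem' := ⟨0, zero_mem _, funext fun _ => map_zero _⟩
  add_mem' := by
    rintro _ _ ⟨D, hD, rfl⟩ ⟨E, hE, rfl⟩
    exact ⟨D + E, add_mem hD hE, funext fun _ => map_add _ _ _⟩
  smul_mem' := by
    rintro c _ ⟨D, hD, rfl⟩
    exact ⟨C c • D, (hessianKer f).smul_mem _ hD, funext fun i => by simp⟩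

theorem eval_mem_hessianKerAt {f : MvPolynomial σ R}
    {D : Derivation R (MvPolynomial σ R) (MvPolynomial σ R)} (hD : D ∈ hessianKer f) (a : σ → R) :
    (fun i => eval a (D (X i))) ∈ hessianKerAt f a :=
  ⟨D, hD, rfl⟩

variable [Finite σ] {p f : MvPolynomial σ R} {a w : σ → R} {d : ℕ}

theorem eval_smul_of_isHomogeneous (hp : p.IsHomogeneous d) (t : R) (a : σ → R) :
    eval (t • a) p = t ^ d * eval a p := by
  have := Fintype.ofFinite σ
  rw [eval_eq', eval_eq', Finset.mul_sum]
  refine Finset.sum_congr rfl fun m hm => ?_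
  have hdeg : ∑ i, m i = d := by
    rw [← hp (MvPolynomial.mem_support_iff.1 hm), Finsupp.weight_apply,
      Finsupp.sum_fintype _ _ fun _ => zero_mul _]
    simp only [Pi.one_apply, smul_eq_mul, mul_one]
  simp only [Pi.smul_apply, smul_eq_mul, mul_pow, Finset.prod_mul_distrib,
    Finset.prod_pow_eq_pow_sum, hdeg]
  ring

theorem gradAt_smul (hf : f.IsHomogeneous d) (t : R) (a : σ → R) :
    gradAt f (t • a) = t ^ (d - 1) • gradAt f a :=
  funext fun _ => eval_smul_of_isHomogeneous hf.pderiv t a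

theorem gradAt_add [NoZeroDivisors R] [CharZero R] (hw : w ∈ hessianKerAt f a) :
    gradAt f (a + w) = gradAt f a := by
  have := Fintype.ofFinite σ
  obtain ⟨D, hD, rfl⟩ := hw
  funext j
  let q := lineRestrict a (fun i => eval a (D (X i))) (pderiv j f)
  have hcoeff : ∀ m, q.coeff (m + 1) = 0 := by
    intro m
    have hm := eval_zero_iterate_derivative_lineRestrict a D (m + 1) (pderiv j f)
    rw [frozenIterate_pderiv_eq_zero hD, map_zero, ← Polynomial.coeff_zero_eq_eval_zero,
      Polynomial.coeff_iterate_derivative, zero_add, Nat.descFactorial_self] at hm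
    exact (smul_eq_zero.1 hm).resolve_left (Nat.factorial_ne_zero _)
  have hconst : q = Polynomial.C (q.coeff 0) := by
    ext (_ | m)
    · rw [Polynomial.coeff_C_zero]
    · rw [hcoeff, Polynomial.coeff_C_succ]
  have heval : q.eval 1 = q.eval 0 := by
    rw [hconst, Polynomial.eval_C, Polynomial.eval_C]
  simpa only [q, gradAt, eval_lineRestrict, one_smul, zero_smul, add_zero] using heval

end KernelDirections

section KernelDirectionsField

variable {σ K : Type*} [Finite σ] [Field K] [CharZero K] {f : MvPolynomial σ K} {a b w : σ → K}
  {d : ℕ}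

theorem gradAt_smul_add (hf : f.IsHomogeneous d) (hw : w ∈ hessianKerAt f a) (t : K) :
    gradAt f (t • a + w) = t ^ (d - 1) • gradAt f a := by
  have hunit : ∀ t : K, t ≠ 0 → gradAt f (t • a + w) = t ^ (d - 1) • gradAt f a := by
    intro t ht
    have hrescale : t • a + w = t • (a + t⁻¹ • w) := by rw [smul_add, smul_inv_smul₀ ht]
    rw [hrescale, gradAt_smul hf, gradAt_add ((hessianKerAt f a).smul_mem _ hw)]
  funext j
  have hline : Polynomial.X * lineRestrict w a (pderiv j f) =
      Polynomial.X * (Polynomial.C (gradAt f a j) * Polynomial.X ^ (d - 1)) := by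
    refine Polynomial.funext fun s => ?_
    rcases eq_or_ne s 0 with rfl | hs
    · simp only [Polynomial.eval_mul, Polynomial.eval_X, zero_mul]
    · have hj : eval (w + s • a) (pderiv j f) = s ^ (d - 1) * gradAt f a j := by
        rw [add_comm]
        exact congrFun (hunit s hs) j
      simp only [Polynomial.eval_mul, Polynomial.eval_X, eval_lineRestrict, hj,
        Polynomial.eval_C, Polynomial.eval_pow, mul_comm (gradAt f a j)]
  have ht := congrArg (Polynomial.eval t) (mul_left_cancel₀ Polynomial.X_ne_zero hline)
  simpa only [gradAt, Pi.smul_apply, smul_eq_mul, eval_lineRestrict, Polynomial.eval_mul,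
    Polynomial.eval_C, Polynomial.eval_pow, Polynomial.eval_X, add_comm w, mul_comm (eval a _)]
    using ht

theorem notMem_hessianKerAt (hd : 1 < d) (hf : f.IsHomogeneous d) (ha : gradAt f a ≠ 0) :
    a ∉ hessianKerAt f a := by
  intro hmem
  refine ha ?_
  simpa only [zero_smul, zero_add, zero_pow (Nat.sub_ne_zero_of_lt hd)] using
    gradAt_smul_add hf hmem 0

theorem sup_span_inf_sup_span_le (hf : f.IsHomogeneous d)
    (hab : LinearIndependent K ![gradAt f a, gradAt f b]) :
    (hessianKerAt f a ⊔ K ∙ a) ⊓ (hessianKerAt f b ⊔ K ∙ b) ≤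
      hessianKerAt f a ⊓ hessianKerAt f b := by
  rintro x ⟨hxa, hxb⟩
  obtain ⟨w, hw, y, hy, hwy⟩ := Submodule.mem_sup.1 hxa
  obtain ⟨u, hu, z, hz, huz⟩ := Submodule.mem_sup.1 hxb
  obtain ⟨t, rfl⟩ := Submodule.mem_span_singleton.1 hy
  obtain ⟨s, rfl⟩ := Submodule.mem_span_singleton.1 hz
  have hgrad : t ^ (d - 1) • gradAt f a = s ^ (d - 1) • gradAt f b := by
    rw [← gradAt_smul_add hf hw, ← gradAt_smul_add hf hu, add_comm, hwy, add_comm, huz]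
  obtain ⟨ht, hs⟩ := hab.eq_zero_of_pair' hgrad
  rw [eq_zero_of_pow_eq_zero ht, zero_smul, add_zero] at hwy
  rw [eq_zero_of_pow_eq_zero hs, zero_smul, add_zero] at huz
  exact ⟨hwy ▸ hw, huz ▸ hu⟩

theorem eq_zero_of_forall_mem_hessianKerAt (hd : 1 < d) (hf : f.IsHomogeneous d)
    (hcone : LinearIndependent K fun i => pderiv i f) {q : MvPolynomial σ K} (hq : q ≠ 0)
    (hw : ∀ b, eval b q ≠ 0 → w ∈ hessianKerAt f b) : w = 0 := by
  have := Fintype.ofFinite σ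
  refine eq_zero_of_mkDerivation_C_mem_hessianKer hd hf hcone fun j => ?_
  refine (mul_eq_zero.1 (MvPolynomial.funext fun b => ?_)).resolve_left hq
  rw [map_mul, map_zero, mul_eq_zero, or_iff_not_imp_left]
  intro hb
  obtain ⟨D, hD, rfl⟩ := hw b hb
  have hbj := congrArg (eval b) (mem_hessianKer.1 hD j)
  rw [derivation_eq_sum_pderiv] at hbj ⊢
  simpa only [map_sum, map_mul, mkDerivation_X, eval_C, map_zero] using hbj

end KernelDirectionsField

/-! ### The Hessian kernel in low dimension -/

section LowDimension

variable {ι K V : Type*} [Field K] [AddCommGroup V] [Module K V]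

theorem linearIndependent_pair_of_minor_ne_zero {v u : ι → K} {i j : ι}
    (h : v i * u j ≠ v j * u i) : LinearIndependent K ![v, u] := by
  refine LinearIndependent.pair_iff.2 fun s t hst => ?_
  have hi := congrFun hst i
  have hj := congrFun hst j
  simp only [Pi.add_apply, Pi.smul_apply, smul_eq_mul, Pi.zero_apply] at hi hj
  have hminor : v i * u j - v j * u i ≠ 0 := sub_ne_zero.2 h
  constructor
  · refine (mul_eq_zero.1 ?_).resolve_right hminor
    linear_combination u j * hi - u i * hj
  · refine (mul_eq_zero.1 ?_).resolve_right hminor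
    linear_combination v i * hj - v j * hi

theorem two_le_finrank_of_linearIndependent_pair [FiniteDimensional K V] {W : Submodule K V}
    {v u : V} (hv : v ∈ W) (hu : u ∈ W) (h : LinearIndependent K ![v, u]) : 2 ≤ finrank K W := by
  have hspan : Submodule.span K (Set.range ![v, u]) ≤ W := by
    simpa [Submodule.span_le, Set.pair_subset_iff] using And.intro hu hv
  simpa [finrank_span_eq_card h] using Submodule.finrank_mono hspan

theorem eq_of_sup_span_inf_sup_span_le [FiniteDimensional K V] (hV : finrank K V ≤ 4)
    {W U : Submodule K V} (hW : 2 ≤ finrank K W) (hU : 2 ≤ finrank K U) {a b : V} (ha : a ∉ W)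
    (hb : b ∉ U) (h : (W ⊔ K ∙ a) ⊓ (U ⊔ K ∙ b) ≤ W ⊓ U) : W = U := by
  have hdim := Submodule.finrank_sup_add_finrank_inf_eq (W ⊔ K ∙ a) (U ⊔ K ∙ b)
  rw [Submodule.finrank_sup_span_singleton ha, Submodule.finrank_sup_span_singleton hb] at hdim
  have hsup := Submodule.finrank_le ((W ⊔ K ∙ a) ⊔ (U ⊔ K ∙ b))
  have hinf := Submodule.finrank_mono h
  calc W = W ⊓ U := (Submodule.eq_of_le_of_finrank_le inf_le_left (by omega)).symm
    _ = U := Submodule.eq_of_le_of_finrank_le inf_le_right (by omega)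

variable [CharZero K] [Fintype ι] {f : MvPolynomial ι K} {d : ℕ}

theorem hessianKerAt_eq_of_linearIndependent_gradAt (hι : Fintype.card ι ≤ 4) (hd : 1 < d)
    (hf : f.IsHomogeneous d) {a b : ι → K} (ha : 2 ≤ finrank K (hessianKerAt f a))
    (hb : 2 ≤ finrank K (hessianKerAt f b))
    (hab : LinearIndependent K ![gradAt f a, gradAt f b]) : hessianKerAt f a = hessianKerAt f b :=
  eq_of_sup_span_inf_sup_span_le (by rwa [finrank_fintype_fun_eq_card]) ha hb
    (notMem_hessianKerAt hd hf (hab.ne_zero 0)) (notMem_hessianKerAt hd hf (hab.ne_zero 1))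
    (sup_span_inf_sup_span_le hf hab)

theorem hessianKer_rank_le_one_of_card_le_four (hι : Fintype.card ι ≤ 4) (hd : 1 < d)
    (hf : f.IsHomogeneous d) (hcone : LinearIndependent K fun i => pderiv i f)
    {D E : Derivation K (MvPolynomial ι K) (MvPolynomial ι K)} (hD : D ∈ hessianKer f)
    (hE : E ∈ hessianKer f) (i j : ι) : D (X i) * E (X j) = D (X j) * E (X i) := by
  by_contra hminor
  have hij : i ≠ j := fun h => hminor (by rw [h])
  let M := D (X i) * E (X j) - D (X j) * E (X i)
  have hM : M ≠ 0 := sub_ne_zero.2 hminor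
  obtain ⟨a, ha⟩ : ∃ a, eval a (M * pderiv j f) ≠ 0 := by
    by_contra! h
    exact mul_ne_zero hM (hcone.ne_zero j) (MvPolynomial.funext fun a => by rw [h, map_zero])
  rw [map_mul] at ha
  have hker : ∀ b, eval b M ≠ 0 → 2 ≤ finrank K (hessianKerAt f b) := fun b hb =>
    two_le_finrank_of_linearIndependent_pair (eval_mem_hessianKerAt hD b)
      (eval_mem_hessianKerAt hE b)
      (linearIndependent_pair_of_minor_ne_zero (sub_ne_zero.1 (by simpa [M] using hb)))
  let q := C (gradAt f a i) * pderiv j f - C (gradAt f a j) * pderiv i f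
  have hq : q ≠ 0 := by
    intro hq0
    have hrel : gradAt f a i • pderiv j f + -gradAt f a j • pderiv i f = 0 := by
      rw [neg_smul, ← sub_eq_add_neg, ← C_mul', ← C_mul']
      exact hq0
    have hpair := (LinearIndepOn.pair_iff _ hij.symm).1 (hcone.linearIndepOn {j, i}) _ _ hrel
    exact right_ne_zero_of_mul ha (neg_eq_zero.1 hpair.2)
  have hconst : (fun i => eval a (D (X i))) = 0 := by
    refine eq_zero_of_forall_mem_hessianKerAt hd hf hcone (mul_ne_zero hq hM) fun b hb => ?_
    rw [map_mul] at hb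
    have hgrad : LinearIndependent K ![gradAt f a, gradAt f b] :=
      linearIndependent_pair_of_minor_ne_zero (i := i) (j := j) <| sub_ne_zero.1 <| by
        simpa [q, gradAt] using left_ne_zero_of_mul hb
    have heq := hessianKerAt_eq_of_linearIndependent_gradAt hι hd hf
      (hker a (left_ne_zero_of_mul ha)) (hker b (right_ne_zero_of_mul hb)) hgrad
    exact heq ▸ eval_mem_hessianKerAt hD a
  refine left_ne_zero_of_mul ha ?_
  simp [M, congrFun hconst]

end LowDimension

theorem nondegenerate_higher_polar_low_dimension_general {K : Type*} [Field K] [CharZero K]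
    {N d k : ℕ} (hN : N ≤ 4) {f : MvPolynomial (Fin N) K} (hf : f.IsHomogeneous d)
    (hcone : LinearIndependent K fun i => pderiv i f) (hk1 : 1 < k) (hk2 : k < d) :
    ∃ g : Fin N → MvPolynomial (Fin N) K,
      (∀ i, ∃ α : Fin N → ℕ, ∑ t, α t = k ∧ g i = iteratedPDeriv K α f) ∧
      AlgebraicIndependent K g := by
  refine (exists_algebraicIndependent_or_derivation_eq_zero
    {g | ∃ α : Fin N → ℕ, ∑ t, α t = k ∧ g = iteratedPDeriv K α f}).resolve_right ?_
  rintro ⟨D, hD0, hD⟩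
  obtain ⟨m, rfl⟩ : ∃ m, k = m + 2 := ⟨k - 2, by omega⟩
  have hD₂ : ∀ i j, D (pderiv i (pderiv j f)) = 0 := fun i j =>
    derivation_eq_zero_of_iteratedPDeriv (k := m) hf.pderiv.pderiv (by omega) fun α hα => by
      rw [← iteratedPDeriv_add_single, ← iteratedPDeriv_add_single]
      exact hD _ ⟨_, by simp [Finset.sum_add_distrib, hα], rfl⟩
  have hD₁ : D ∈ hessianKer f := fun j =>
    derivation_eq_zero_of_pderiv hf.pderiv (by omega) fun i => hD₂ i j
  exact hD0 (eq_zero_of_hessianKer_rank_le_one (by omega) hf hcone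
    (fun _ hD _ hE => hessianKer_rank_le_one_of_card_le_four (by simpa using hN) (by omega) hf hcone
      hD hE) hD₁ hD₂)

/-- **Corollary.** Let `n ≤ 3`, let `f` be a reduced homogeneous polynomial of degree `d`
in `n+1` variables such that `V(f) ⊂ ℙ^n` is not a cone (equivalently, its first order
partial derivatives are linearly independent over `ℂ`), and let `1 < k < d−1`.  Then
there are `n+1` algebraically independent elements over `ℂ` among the `k`-th order
partial derivatives of `f`; equivalently, the `k`-th polar map of `V(f)` is not
degenerate. -/
theorem nondegenerate_higher_polar_low_dimension
    {n d k : ℕ} (hn : n ≤ 3)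
    (f : MvPolynomial (Fin (n + 1)) ℂ) (hf : f.IsHomogeneous d)
    (hred : Squarefree f)
    (hcone : LinearIndependent ℂ (fun i : Fin (n + 1) => pderiv i f))
    (hk1 : 1 < k) (hk2 : k + 1 < d) :
    ∃ g : Fin (n + 1) → MvPolynomial (Fin (n + 1)) ℂ,
      (∀ i, ∃ α : Fin (n + 1) → ℕ, (∑ t, α t) = k ∧ g i = pd α f) ∧
      AlgebraicIndependent ℂ g :=
  nondegenerate_higher_polar_low_dimension_general (by omega) hf hcone hk1 (by omega)
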